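/- Let α, β ∈ Φ⁺ with α + β ∈ Φ⁺, and set Φ^{>0}_{α,β} := {iα + jβ : i, j positive integers} ∩ Φ⁺. Then Φ^{>0}_{α,β} is a closed pattern and is contained in the normal closure of {α + β} in the closed pattern generated by {α, β}. -/

import Mathlib

/-!
Closedness is additivity of the coefficients. For the containment, fix a closed pattern `N`, normal
in the closed pattern generated by `{a, b}`, with `a + b ∈ N`; every positive root `v = p a + q b`
with `p, q > 0` is shown to lie in `N` by induction on `p + q`.

As `0 < ⟪v, v⟫ = p ⟪v, a⟫ + q ⟪v, b⟫`, one of `⟪v, a⟫`, `⟪v, b⟫` is positive, say the first. Then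
`v - a = (p - 1) a + q b` is a root (`RSB.sub_mem_of_inner_pos`), and it is positive because it is a
nonnegative combination of positive roots. If `p > 1`, it lies in `N` by induction, so
`v = a + (v - a)` does too, by normality. If `p = 1`, then `v - a = q b` is a root, so `q = 1` as the
root system is reduced, and `v = a + b`.

Positivity is handled through the height, a linear functional that is positive on positive roots and
nonpositive on the other roots (`RSB.exists_height`).
-/

/-!
Combinatorics of closed patterns in the set of positive roots of a finite
reduced irreducible crystallographic root system with a fixed base, following
"On the characters of the Sylow p-subgroups of untwisted Chevalley groups".
-/

namespace RSP

variable {V : Type*} [AddCommGroup V]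

/-- `S` is a closed pattern (relative to the ambient set `Φ` of positive
roots): for all `a, b ∈ S` with `a + b ∈ Φ` one has `a + b ∈ S`. -/
def ClosedIn (Φ S : Set V) : Prop :=
  ∀ a ∈ S, ∀ b ∈ S, a + b ∈ Φ → a + b ∈ S

/-- `N` is a normal pattern in `Φ`: `N ⊆ Φ` and for all `a ∈ Φ`, `b ∈ N`
with `a + b ∈ Φ` one has `a + b ∈ N`. -/
def NormalPattern (Φ N : Set V) : Prop :=
  N ⊆ Φ ∧ ∀ a ∈ Φ, ∀ b ∈ N, a + b ∈ Φ → a + b ∈ N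

/-- `N` is normal in `S` (relative to `Φ`): for all `a ∈ S`, `b ∈ N` with
`a + b ∈ Φ` one has `a + b ∈ N`. -/
def NormalIn (Φ S N : Set V) : Prop :=
  ∀ a ∈ S, ∀ b ∈ N, a + b ∈ Φ → a + b ∈ N

/-- `rz(N) = {β ∈ Φ⁺ ∖ N : ∀ γ ∈ Φ⁺, β + γ ∉ Φ⁺ or β + γ ∈ N}`. -/
def rzSet (Φ N : Set V) : Set V :=
  {b | b ∈ Φ \ N ∧ ∀ c ∈ Φ, b + c ∉ Φ ∨ b + c ∈ N}

/-- `a ≺ b` iff `b - a` is a sum of one or more elements of `Φ`. -/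
def prec (Φ : Set V) (a b : V) : Prop :=
  ∃ m : Multiset V, m ≠ 0 ∧ (∀ v ∈ m, v ∈ Φ) ∧ b = a + m.sum

/-- `a ≼ b` iff `a ≺ b` or `a = b`. -/
def preceq (Φ : Set V) (a b : V) : Prop := prec Φ a b ∨ a = b

/-- The hook `h(a) = {γ ∈ Φ⁺ : a - γ ∈ Φ⁺ ∪ {0}}`. -/
def hook (Φ : Set V) (a : V) : Set V :=
  {c | c ∈ Φ ∧ (a - c ∈ Φ ∨ a - c = 0)}

/-- `n₀(a) = {a}` and `n_{i+1}(a) = {b + c : b ∈ n_i(a), c ∈ Φ⁺} ∩ Φ⁺`. -/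
def nIter (Φ : Set V) (a : V) : ℕ → Set V
  | 0 => {a}
  | i + 1 => {x | x ∈ Φ ∧ ∃ b ∈ nIter Φ a i, ∃ c ∈ Φ, x = b + c}

/-- `n(a) = ⋃_{i ≥ 1} n_i(a)`. -/
def nSet (Φ : Set V) (a : V) : Set V := ⋃ i : ℕ, nIter Φ a (i + 1)

/-- `k₀(a) = n(a)` and `k_{i+1}(a) = (rz(k_i(a)) ∖ {a}) ∪ k_i(a)`. -/
def kIter (Φ : Set V) (a : V) : ℕ → Set V
  | 0 => nSet Φ a
  | i + 1 => (rzSet Φ (kIter Φ a i) \ {a}) ∪ kIter Φ a i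

/-- `k(a) = ⋃_{i ≥ 0} k_i(a)`. -/
def kSet (Φ : Set V) (a : V) : Set V := ⋃ i : ℕ, kIter Φ a i

/-- `w₀(a) = {a}` and `w_{i+1}(a) = ⋃_{b ∈ w_i(a)} h(b)`. -/
def wIter (Φ : Set V) (a : V) : ℕ → Set V
  | 0 => {a}
  | i + 1 => ⋃ b ∈ wIter Φ a i, hook Φ b

/-- `w(a) = ⋃_{i ≥ 0} w_i(a)`. -/
def wSet (Φ : Set V) (a : V) : Set V := ⋃ i : ℕ, wIter Φ a i

/-- The closed pattern generated by `M`: the intersection of all closed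
patterns containing `M`. -/
def genPattern (Φ M : Set V) : Set V :=
  ⋂₀ {S : Set V | M ⊆ S ∧ S ⊆ Φ ∧ ClosedIn Φ S}

/-- The normal closure of `M` in a closed pattern `S`: the intersection of all
closed patterns `N` with `M ⊆ N ⊆ S` and `N ⊴ S`. -/
def normalClosure (Φ S M : Set V) : Set V :=
  ⋂₀ {N : Set V | M ⊆ N ∧ N ⊆ S ∧ ClosedIn Φ N ∧ NormalIn Φ S N}

end RSP

open scoped RealInnerProductSpace

/-- A finite reduced irreducible crystallographic root system `roots` in a real
inner product space, together with a base `base` (so that every root is a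
nonnegative or nonpositive integral combination of the base). -/
structure RSB (V : Type*) [NormedAddCommGroup V] [InnerProductSpace ℝ V] where
  roots : Set V
  base : Set V
  finite : roots.Finite
  zero_not_mem : (0 : V) ∉ roots
  span_top : Submodule.span ℝ roots = ⊤
  reduced : ∀ a ∈ roots, ∀ t : ℝ, t • a ∈ roots → t = 1 ∨ t = -1
  reflection_mem : ∀ a ∈ roots, ∀ b ∈ roots,
      b - (2 * ⟪b, a⟫ / ⟪a, a⟫) • a ∈ roots
  crystallographic : ∀ a ∈ roots, ∀ b ∈ roots,
      ∃ z : ℤ, 2 * ⟪b, a⟫ / ⟪a, a⟫ = (z : ℝ)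
  irreducible : ∀ A B : Set V, A ∪ B = roots → A.Nonempty → B.Nonempty →
      ∃ a ∈ A, ∃ b ∈ B, ⟪a, b⟫ ≠ 0
  base_subset : base ⊆ roots
  base_indep : LinearIndependent ℝ (fun x : ↥base => (x : V))
  base_decomp : ∀ a ∈ roots,
      (∃ c : V →₀ ℕ, ↑c.support ⊆ base ∧ a = c.sum fun v k => k • v) ∨
      (∃ c : V →₀ ℕ, ↑c.support ⊆ base ∧ a = -(c.sum fun v k => k • v))

/-- The set `Φ⁺` of positive roots (w.r.t. the base) of a root system. -/
def RSB.pos {V : Type*} [NormedAddCommGroup V] [InnerProductSpace ℝ V]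
    (R : RSB V) : Set V :=
  {a | a ∈ R.roots ∧ ∃ c : V →₀ ℕ, ↑c.support ⊆ R.base ∧ a = c.sum fun v k => k • v}

open RSP


namespace RSB

variable {V : Type*} [NormedAddCommGroup V] [InnerProductSpace ℝ V] (R : RSB V)

lemma inner_self_pos {a : V} (ha : a ∈ R.roots) : 0 < ⟪a, a⟫ :=
  real_inner_self_pos.2 fun h => R.zero_not_mem (h ▸ ha)

lemma neg_mem {a : V} (ha : a ∈ R.roots) : -a ∈ R.roots := by
  have h := R.reflection_mem a ha a ha
  rw [mul_div_assoc, div_self (R.inner_self_pos ha).ne'] at h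
  convert h using 1
  module

/-- If two distinct roots have positive inner product, one of the two Cartan integers equals `1`:
otherwise both are at least `2`, which forces `‖v - a‖ ^ 2 ≤ 0`. A reflection then produces
`v - a`. -/
lemma sub_mem_of_inner_pos {v a : V} (hv : v ∈ R.roots) (ha : a ∈ R.roots)
    (h : 0 < ⟪v, a⟫) (hne : v ≠ a) : v - a ∈ R.roots := by
  have haa := R.inner_self_pos ha
  have hvv := R.inner_self_pos hv
  have hcomm : ⟪a, v⟫ = ⟪v, a⟫ := real_inner_comm _ _
  obtain ⟨m, hm⟩ := R.crystallographic a ha v hv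
  obtain ⟨n, hn⟩ := R.crystallographic v hv a ha
  have hm0 : 0 < m := by
    have : (0 : ℝ) < m := hm ▸ by positivity
    exact_mod_cast this
  have hn0 : 0 < n := by
    have : (0 : ℝ) < n := by rw [← hn, hcomm]; positivity
    exact_mod_cast this
  by_cases hm1 : m = 1
  · have h1 := R.reflection_mem a ha v hv
    rw [hm, hm1] at h1
    simpa using h1
  by_cases hn1 : n = 1
  · have h1 := R.neg_mem (R.reflection_mem v hv a ha)
    rw [hn, hn1] at h1
    simpa using h1
  exfalso
  have hm2 : (2 : ℝ) ≤ m := by exact_mod_cast (by omega : (2 : ℤ) ≤ m)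
  have hn2 : (2 : ℝ) ≤ n := by exact_mod_cast (by omega : (2 : ℤ) ≤ n)
  rw [← hm, le_div_iff₀ haa] at hm2
  rw [← hn, le_div_iff₀ hvv, hcomm] at hn2
  have hpos : 0 < ⟪v - a, v - a⟫ := real_inner_self_pos.2 (sub_ne_zero.2 hne)
  rw [real_inner_sub_sub_self] at hpos
  linarith

/-- The linear functional with value `1` on each base element detects positive roots. -/
lemma exists_height : ∃ f : V →ₗ[ℝ] ℝ, ∀ v ∈ R.roots, v ∈ R.pos ↔ 0 < f v := by
  have hli : LinearIndepOn ℝ id R.base := R.base_indep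
  let B := Module.Basis.extend hli
  let f : V →ₗ[ℝ] ℝ := B.constr ℝ fun _ => (1 : ℝ)
  have hf : ∀ x ∈ R.base, f x = 1 := fun x hx => by
    have h := B.constr_basis ℝ (fun _ => (1 : ℝ)) ⟨x, hli.subset_extend _ hx⟩
    rwa [Module.Basis.extend_apply_self] at h
  have hsum : ∀ c : V →₀ ℕ, ↑c.support ⊆ R.base →
      f (c.sum fun v k => k • v) = ∑ v ∈ c.support, (c v : ℝ) := fun c hc => by
    rw [Finsupp.sum, map_sum]
    refine Finset.sum_congr rfl fun x hx => ?_
    rw [map_nsmul, hf x (hc hx)]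
    simp
  refine ⟨f, fun v hv => ⟨?_, fun hpos => ?_⟩⟩
  · rintro ⟨-, c, hc, rfl⟩
    rw [hsum c hc]
    refine Finset.sum_pos (fun x hx => ?_) ?_
    · exact_mod_cast Nat.pos_of_ne_zero (Finsupp.mem_support_iff.1 hx)
    · rw [Finset.nonempty_iff_ne_empty]
      intro h
      rw [Finsupp.sum, h, Finset.sum_empty] at hv
      exact R.zero_not_mem hv
  · rcases R.base_decomp v hv with h | ⟨c, hc, rfl⟩
    · exact ⟨hv, h⟩
    · rw [map_neg, hsum c hc] at hpos
      have : (0 : ℝ) ≤ ∑ v ∈ c.support, (c v : ℝ) := by positivity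
      linarith

/-- The descent step: a positive root `v = p a + q b` with `p, q > 0` and `⟪v, a⟫ > 0` either is
`a + b` or remains of this form after `a` is subtracted. -/
lemma descent {a b : V} (ha : a ∈ R.pos) (hb : b ∈ R.pos) {p q : ℕ} (hp : 0 < p) (hq : 0 < q)
    (hv : p • a + q • b ∈ R.pos) (hin : 0 < ⟪p • a + q • b, a⟫) :
    (p = 1 ∧ q = 1) ∨ (1 < p ∧ (p - 1) • a + q • b ∈ R.pos) := by
  obtain ⟨f, hf⟩ := R.exists_height
  have hfa := (hf a ha.1).1 ha
  have hfb := (hf b hb.1).1 hb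
  obtain ⟨k, rfl⟩ : ∃ k, p = k + 1 := ⟨p - 1, by omega⟩
  have hval : (k + 1) • a + q • b - a = k • a + q • b := by module
  have hfpos : 0 < f (k • a + q • b) := by
    rw [map_add, map_nsmul, map_nsmul, nsmul_eq_mul, nsmul_eq_mul]
    positivity
  have hne : (k + 1) • a + q • b ≠ a := fun h => by
    rw [← hval, h, sub_self, map_zero] at hfpos
    exact lt_irrefl _ hfpos
  have hroot := R.sub_mem_of_inner_pos hv.1 ha.1 hin hne
  rw [hval] at hroot
  rcases Nat.eq_zero_or_pos k with rfl | hk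
  · left
    rw [zero_smul, zero_add, ← Nat.cast_smul_eq_nsmul ℝ] at hroot
    refine ⟨rfl, ?_⟩
    rcases R.reduced b hb.1 _ hroot with h | h
    · exact_mod_cast h
    · have : (0 : ℝ) ≤ q := by positivity
      linarith
  · right
    exact ⟨by omega, (hf _ hroot).2 hfpos⟩

end RSB

/-- For `α, β ∈ Φ⁺` with `α + β ∈ Φ⁺`, the set
`Φ^{>0}_{α,β} = {iα + jβ : i, j > 0} ∩ Φ⁺` is a closed pattern and is contained
in the normal closure of `{α + β}` in the closed pattern generated by
`{α, β}`. -/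
theorem pos_combinations_closed_and_in_normalClosure
    (V : Type*) [NormedAddCommGroup V] [InnerProductSpace ℝ V]
    [FiniteDimensional ℝ V]
    (R : RSB V) (a b : V) (ha : a ∈ R.pos) (hb : b ∈ R.pos)
    (hab : a + b ∈ R.pos) :
    ClosedIn R.pos {v | v ∈ R.pos ∧ ∃ p q : ℕ, 0 < p ∧ 0 < q ∧ v = p • a + q • b} ∧
    {v | v ∈ R.pos ∧ ∃ p q : ℕ, 0 < p ∧ 0 < q ∧ v = p • a + q • b} ⊆
      normalClosure R.pos (genPattern R.pos {a, b}) {a + b} := by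
  constructor
  · rintro _ ⟨-, p, q, hp, hq, rfl⟩ _ ⟨-, p', q', hp', hq', rfl⟩ h
    exact ⟨h, p + p', q + q', by omega, by omega, by module⟩
  rintro _ ⟨hv, p, q, hp, hq, rfl⟩ N ⟨habN, -, -, hN⟩
  have haS : a ∈ genPattern R.pos {a, b} := fun S hS => hS.1 (by simp)
  have hbS : b ∈ genPattern R.pos {a, b} := fun S hS => hS.1 (by simp)
  induction hn : p + q using Nat.strong_induction_on generalizing p q with
  | _ n ih =>
  have hpos := R.inner_self_pos hv.1
  have key : 0 < ⟪p • a + q • b, a⟫ ∨ 0 < ⟪p • a + q • b, b⟫ := by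
    by_contra! hc
    have hexp : ⟪p • a + q • b, p • a + q • b⟫ =
        p * ⟪p • a + q • b, a⟫ + q * ⟪p • a + q • b, b⟫ := by
      generalize hw : p • a + q • b = w
      conv_lhs => rw [← hw]
      rw [← hw, ← Nat.cast_smul_eq_nsmul ℝ p a, ← Nat.cast_smul_eq_nsmul ℝ q b, inner_add_right,
        real_inner_smul_right, real_inner_smul_right]
    have h1 := mul_nonneg (Nat.cast_nonneg (α := ℝ) p) (neg_nonneg.2 hc.1)
    have h2 := mul_nonneg (Nat.cast_nonneg (α := ℝ) q) (neg_nonneg.2 hc.2)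
    linarith
  rcases key with hin | hin
  · rcases R.descent ha hb hp hq hv hin with ⟨rfl, rfl⟩ | ⟨hp1, hmem⟩
    · exact habN (by simp)
    · have hw := ih _ (by omega) (p - 1) q (by omega) hq hmem rfl
      obtain ⟨k, rfl⟩ : ∃ k, p = k + 1 := ⟨p - 1, by omega⟩
      have he : a + ((k + 1 - 1) • a + q • b) = (k + 1) • a + q • b := by
        rw [Nat.add_sub_cancel]; module
      have := hN a haS _ hw (he.symm ▸ hv)
      rwa [he] at this
  · rw [add_comm] at hin
    rcases R.descent hb ha hq hp (add_comm (p • a) (q • b) ▸ hv) hin with ⟨rfl, rfl⟩ | ⟨hq1, hmem⟩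
    · exact habN (by simp)
    · have hw := ih _ (by omega) p (q - 1) hp (by omega) (add_comm _ (p • a) ▸ hmem) rfl
      obtain ⟨k, rfl⟩ : ∃ k, q = k + 1 := ⟨q - 1, by omega⟩
      have he : b + (p • a + (k + 1 - 1) • b) = p • a + (k + 1) • b := by
        rw [Nat.add_sub_cancel]; module
      have := hN b hbS _ hw (he.symm ▸ hv)
      rwa [he] at this
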